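/- Let n ≥ 2, and in S_{2n} let ρ be the involution pairing 2k with 2k+1. Then the number of permutations σ ∈ S_{2n} such that σ·ρ·σ⁻¹·ρ is a product of two disjoint n-cycles equals 2^{2n−1}·n!·(n−1)!. -/

import Mathlib

/-- The fixed-point-free involution of `Fin (2n)` pairing `2k` with `2k+1`. -/
def rho (n : ℕ) : Equiv.Perm (Fin (2 * n)) :=
  Function.Involutive.toPerm
    (fun x => ⟨if x.val % 2 = 0 then x.val + 1 else x.val - 1, by
      have := x.isLt; split_ifs with h <;> omega⟩)
    (by
      intro x
      have hx := x.isLt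
      apply Fin.ext
      dsimp only
      split_ifs <;> omega)

open Equiv

theorem cycleType_of_semireg {α : Type*} [Fintype α] [DecidableEq α] (π : Perm α) (m k : ℕ)
    (hm : 2 ≤ m) (hc : Fintype.card α = k * m)
    (h : ∀ x (i : ℕ), (π ^ i) x = x ↔ m ∣ i) : π.cycleType = Multiset.replicate k m := by
  have h1 : ∀ b ∈ π.cycleType, b = m := by
    intro b hb
    rw [Perm.cycleType_def, Multiset.mem_map] at hb
    obtain ⟨c, hc, rfl⟩ := hb
    have hc' : c ∈ π.cycleFactorsFinset := hc
    have hcy := (Perm.mem_cycleFactorsFinset_iff.1 hc').1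
    obtain ⟨x, hx⟩ := hcy.nonempty_support
    have hon := Perm.isCycleOn_support_of_mem_cycleFactorsFinset hc'
    apply Nat.dvd_antisymm
    · exact (hon.pow_apply_eq hx).1 ((h x m).2 dvd_rfl)
    · exact (h x _).1 ((hon.pow_apply_eq hx).2 dvd_rfl)
  have h2 := Multiset.eq_replicate_card.2 h1
  have h3 := Perm.sum_cycleType π
  have h4 : π.support = Finset.univ := by
    ext x
    simp only [Perm.mem_support, Finset.mem_univ, iff_true]
    intro hx
    have := (h x 1).1 (by simpa using hx)
    have := Nat.le_of_dvd one_pos this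
    omega
  rw [h4, Finset.card_univ, hc, h2, Multiset.sum_replicate, smul_eq_mul] at h3
  rw [h2, Nat.eq_of_mul_eq_mul_right (by omega) h3]

theorem zpow_iff_of_cycleType {α : Type*} [Fintype α] [DecidableEq α] (π : Perm α) (n : ℕ)
    (hc : Fintype.card α = 2 * n) (h : π.cycleType = {n, n}) (x : α) (i : ℤ) :
    (π ^ i) x = x ↔ (n : ℤ) ∣ i := by
  have h3 := Perm.sum_cycleType π
  have h5 : π.support = Finset.univ := by
    rw [← Finset.card_eq_iff_eq_univ, ← h3, h, hc]
    simp; ring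
  have hx : x ∈ π.support := by rw [h5]; simp
  have hm := Perm.cycleOf_mem_cycleFactorsFinset_iff.2 hx
  have hon := Perm.isCycleOn_support_of_mem_cycleFactorsFinset hm
  have hcard : (π.cycleOf x).support.card ∈ π.cycleType := by
    rw [Perm.cycleType_def, Multiset.mem_map]
    exact ⟨_, hm, rfl⟩
  have : (π.cycleOf x).support.card = n := by
    rw [h] at hcard; simpa using hcard
  rw [hon.zpow_apply_eq (by simpa using hx), this]

section pairs
variable {α : Type*} [Fintype α] [DecidableEq α]

/-- The parametrisation of the alternating orbit of `x`. -/
def phi (ρ τ : Perm α) (x : α) (p : ℤ × Bool) : α :=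
  if p.2 then ρ (((τ * ρ) ^ p.1) x) else ((τ * ρ) ^ p.1) x

theorem rho_zpow (ρ τ : Perm α) (hρ : ρ * ρ = 1) (hτ : τ * τ = 1) (i : ℤ) :
    ρ * (τ * ρ) ^ i = (τ * ρ) ^ (-i) * ρ := by
  have hr : ρ⁻¹ = ρ := inv_eq_of_mul_eq_one_left hρ
  have ht : τ⁻¹ = τ := inv_eq_of_mul_eq_one_left hτ
  have : SemiconjBy ρ (τ * ρ) (τ * ρ)⁻¹ := by
    unfold SemiconjBy
    rw [mul_inv_rev, hr, ht, mul_assoc]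
  have := this.zpow_right i
  rw [inv_zpow', ] at this
  exact this

theorem refl_fpf (ρ τ : Perm α) (hρ : ρ * ρ = 1) (hτ : τ * τ = 1) (fρ : ∀ x, ρ x ≠ x)
    (fτ : ∀ x, τ x ≠ x) (i : ℤ) (x : α) : ρ (((τ * ρ) ^ i) x) ≠ x := by
  intro h
  obtain ⟨k, rfl | rfl⟩ := Int.even_or_odd' i
  · have e : ρ * (τ * ρ) ^ (2 * k) = ((τ * ρ) ^ k)⁻¹ * ρ * (τ * ρ) ^ k := by
      rw [two_mul, zpow_add, ← mul_assoc, rho_zpow ρ τ hρ hτ, zpow_neg]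
    have h' : (ρ * (τ * ρ) ^ (2 * k)) x = x := h
    rw [e, Perm.mul_apply, Perm.mul_apply, Perm.inv_eq_iff_eq] at h'
    exact fρ _ h'
  · have e : ρ * (τ * ρ) ^ (2 * k + 1) = ((τ * ρ) ^ k)⁻¹ * (ρ * τ * ρ) * (τ * ρ) ^ k := by
      rw [show 2 * k + 1 = k + (1 + k) by ring, zpow_add, ← mul_assoc, rho_zpow ρ τ hρ hτ, zpow_neg,
        zpow_add, zpow_one]
      simp only [mul_assoc]
    have h' : (ρ * (τ * ρ) ^ (2 * k + 1)) x = x := h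
    rw [e, Perm.mul_apply, Perm.mul_apply, Perm.inv_eq_iff_eq] at h'
    generalize ((τ * ρ) ^ k) x = y at h'
    apply fτ (ρ y)
    have := congrArg ρ h'
    simp only [Perm.mul_apply] at this
    rw [← Perm.mul_apply, hρ] at this
    exact this

/-- A good pair of fixed-point-free involutions. -/
structure Good (n : ℕ) (ρ τ : Perm α) : Prop where
  hρ : ρ * ρ = 1
  hτ : τ * τ = 1
  fρ : ∀ x, ρ x ≠ x
  fτ : ∀ x, τ x ≠ x
  hz : ∀ x (i : ℤ), ((τ * ρ) ^ i) x = x ↔ (n : ℤ) ∣ i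

theorem Good.rho_rho {n : ℕ} {ρ τ : Perm α} (g : Good n ρ τ) (x : α) : ρ (ρ x) = x := by
  rw [← Perm.mul_apply, g.hρ]; rfl

theorem Good.zpow_eq {n : ℕ} {ρ τ : Perm α} (g : Good n ρ τ) (x : α) (i j : ℤ) :
    ((τ * ρ) ^ i) x = ((τ * ρ) ^ j) x ↔ (n : ℤ) ∣ i - j := by
  rw [← g.hz x, sub_eq_neg_add, zpow_add, zpow_neg, Perm.mul_apply, Perm.inv_eq_iff_eq]

theorem Good.zpow_ne {n : ℕ} {ρ τ : Perm α} (g : Good n ρ τ) (x : α) (i j : ℤ) :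
    ρ (((τ * ρ) ^ i) x) ≠ ((τ * ρ) ^ j) x := by
  intro h
  apply refl_fpf ρ τ g.hρ g.hτ g.fρ g.fτ (i - j) (((τ * ρ) ^ j) x)
  rw [← Perm.mul_apply ((τ * ρ) ^ (i - j)), ← zpow_add, sub_add_cancel, h]

theorem Good.phi_eq {n : ℕ} {ρ τ : Perm α} (g : Good n ρ τ) (x : α) (p q : ℤ × Bool) :
    phi ρ τ x p = phi ρ τ x q ↔ p.2 = q.2 ∧ (n : ℤ) ∣ p.1 - q.1 := by
  obtain ⟨i, b⟩ := p
  obtain ⟨j, c⟩ := q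
  cases b <;> cases c <;> simp [phi, g.zpow_eq, g.zpow_ne, (g.zpow_ne _ _ _).symm]

theorem Good.phi_surj {n : ℕ} {ρ τ : Perm α} (g : Good n ρ τ)
    (hc : Fintype.card α = 2 * n) (x : α) : Function.Surjective (phi ρ τ x) := by
  let f : Fin n × Bool → α := fun p => phi ρ τ x ((p.1 : ℕ), p.2)
  have hf : Function.Injective f := by
    rintro ⟨i, b⟩ ⟨j, c⟩ h
    obtain ⟨h1, h2⟩ := (g.phi_eq x _ _).1 h
    simp only at h1 h2
    have : (i : ℤ) - j = 0 := Int.eq_zero_of_abs_lt_dvd h2 (by rw [abs_lt]; omega)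
    ext
    · simp only; omega
    · simp [h1]
  have hb : Function.Bijective f := by
    rw [Fintype.bijective_iff_injective_and_card]
    exact ⟨hf, by simp [hc]; ring⟩
  intro y
  obtain ⟨p, hp⟩ := hb.2 y
  exact ⟨_, hp⟩

theorem Good.rho_phi {n : ℕ} {ρ τ : Perm α} (g : Good n ρ τ) (x : α) (p : ℤ × Bool) :
    ρ (phi ρ τ x p) = phi ρ τ x (p.1, !p.2) := by
  obtain ⟨i, b⟩ := p
  cases b <;> simp [phi, g.rho_rho]

theorem Good.pi_phi {n : ℕ} {ρ τ : Perm α} (g : Good n ρ τ) (x : α) (p : ℤ × Bool) :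
    (τ * ρ) (phi ρ τ x p) = phi ρ τ x (if p.2 then p.1 - 1 else p.1 + 1, p.2) := by
  obtain ⟨i, b⟩ := p
  cases b
  · simp only [phi, Bool.false_eq_true, if_false]
    rw [add_comm, zpow_add, zpow_one, Perm.mul_apply (τ * ρ)]
  · simp only [phi, if_true]
    have h1 := rho_zpow ρ τ g.hρ g.hτ i
    have h2 := rho_zpow ρ τ g.hρ g.hτ (i - 1)
    rw [← Perm.mul_apply, ← Perm.mul_apply, ← Perm.mul_apply, mul_assoc, h1, h2, ← mul_assoc,
      ← zpow_one_add, show 1 + -i = -(i - 1) by ring]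

theorem Good.exists_conj {n : ℕ} {ρ τ τ' : Perm α} (g : Good n ρ τ) (g' : Good n ρ τ')
    (hc : Fintype.card α = 2 * n) (x x' : α) :
    ∃ h : Perm α, h * ρ = ρ * h ∧ h * τ = τ' * h ∧ h x = x' := by
  let s := Function.surjInv (g.phi_surj hc x)
  have hs : ∀ y, phi ρ τ x (s y) = y := Function.surjInv_eq (g.phi_surj hc x)
  let f : α → α := fun y => phi ρ τ' x' (s y)
  have hf : ∀ p, f (phi ρ τ x p) = phi ρ τ' x' p := by
    intro p
    exact (g'.phi_eq _ _ _).2 ((g.phi_eq _ _ _).1 (hs _))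
  have hsurj : Function.Surjective f := by
    intro y
    obtain ⟨p, rfl⟩ := g'.phi_surj hc x' y
    exact ⟨_, hf p⟩
  let h : Perm α := Equiv.ofBijective f (Finite.surjective_iff_bijective.1 hsurj)
  have hh : ∀ p, h (phi ρ τ x p) = phi ρ τ' x' p := hf
  have c1 : h * ρ = ρ * h := by
    ext y
    obtain ⟨p, rfl⟩ := g.phi_surj hc x y
    rw [Perm.mul_apply, Perm.mul_apply, g.rho_phi, hh, hh, g'.rho_phi]
  have c2 : h * (τ * ρ) = (τ' * ρ) * h := by
    ext y
    obtain ⟨p, rfl⟩ := g.phi_surj hc x y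
    rw [Perm.mul_apply h, Perm.mul_apply _ h, g.pi_phi, hh, hh, g'.pi_phi]
  refine ⟨h, c1, ?_, ?_⟩
  · rw [mul_assoc, ← c1, ← mul_assoc, ← mul_assoc] at c2
    exact mul_right_cancel c2
  · have := hh (0, false)
    simpa [phi] using this

theorem Good.rigid {n : ℕ} {ρ τ : Perm α} (g : Good n ρ τ)
    (hc : Fintype.card α = 2 * n) (x : α) (k : Perm α) (h1 : k * ρ = ρ * k) (h2 : k * τ = τ * k)
    (hx : k x = x) : k = 1 := by
  have h3 : Commute k (τ * ρ) := Commute.mul_right h2 h1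
  ext y
  obtain ⟨⟨i, b⟩, rfl⟩ := g.phi_surj hc x y
  have h4 : k (((τ * ρ) ^ i) x) = ((τ * ρ) ^ i) x := by
    have := h3.zpow_right i
    rw [← Perm.mul_apply, this.eq, Perm.mul_apply, hx]
  cases b
  · simpa [phi] using h4
  · simp only [phi, if_true, Perm.one_apply]
    rw [← Perm.mul_apply, h1, Perm.mul_apply, h4]

theorem good_of_conj {n : ℕ} {ρ σ : Perm α} (hc : Fintype.card α = 2 * n) (hρ : ρ * ρ = 1)
    (fρ : ∀ x, ρ x ≠ x) (h : (σ * ρ * σ⁻¹ * ρ).cycleType = {n, n}) :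
    Good n ρ (σ * ρ * σ⁻¹) where
  hρ := hρ
  hτ := by
    rw [show σ * ρ * σ⁻¹ * (σ * ρ * σ⁻¹) = σ * (ρ * ρ) * σ⁻¹ by group, hρ]; group
  fρ := fρ
  fτ := by
    intro x hx
    rw [mul_assoc, Perm.mul_apply, Perm.mul_apply, ← Perm.eq_inv_iff_eq] at hx
    exact fρ _ hx
  hz := zpow_iff_of_cycleType _ n hc h

theorem count_good {n : ℕ} {ρ σ₀ : Perm α} (hc : Fintype.card α = 2 * n) (hn : 0 < n)
    (hρ : ρ * ρ = 1)
    (fρ : ∀ x, ρ x ≠ x) (h₀ : (σ₀ * ρ * σ₀⁻¹ * ρ).cycleType = {n, n}) :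
    Nat.card {σ : Perm α | (σ * ρ * σ⁻¹ * ρ).cycleType = {n, n}} * (2 * n) =
      Nat.card (Subgroup.centralizer {ρ}) * Nat.card (Subgroup.centralizer {ρ}) := by
  have hmem : ∀ c : Perm α, c ∈ Subgroup.centralizer {ρ} ↔ c * ρ = ρ * c := by
    intro c
    rw [Subgroup.mem_centralizer_singleton_iff]
  have g₀ := good_of_conj hc hρ fρ h₀
  obtain ⟨x₀⟩ : Nonempty α := Fintype.card_pos_iff.1 (by omega)
  have key : ∀ h d : Perm α, h * ρ = ρ * h → d * ρ = ρ * d →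
      (h * σ₀ * d) * ρ * (h * σ₀ * d)⁻¹ = h * (σ₀ * ρ * σ₀⁻¹) * h⁻¹ := by
    intro h d _ hd
    calc (h * σ₀ * d) * ρ * (h * σ₀ * d)⁻¹ = h * σ₀ * (d * ρ) * d⁻¹ * σ₀⁻¹ * h⁻¹ := by group
      _ = _ := by rw [hd]; group
  let F : Subgroup.centralizer {ρ} × Subgroup.centralizer {ρ} →
      {σ : Perm α | (σ * ρ * σ⁻¹ * ρ).cycleType = {n, n}} × α := fun p =>
    (⟨p.1.1 * σ₀ * p.2.1, by
      have h1 := (hmem _).1 p.1.2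
      have h2 := (hmem _).1 p.2.2
      show (_ * ρ * (_)⁻¹ * ρ).cycleType = _
      rw [key _ _ h1 h2]
      have : p.1.1⁻¹ * ρ = ρ * p.1.1⁻¹ := by
        rw [inv_mul_eq_iff_eq_mul, ← mul_assoc, h1]; group
      rw [mul_assoc _ p.1.1⁻¹, this, show p.1.1 * (σ₀ * ρ * σ₀⁻¹) * (ρ * p.1.1⁻¹)
        = p.1.1 * (σ₀ * ρ * σ₀⁻¹ * ρ) * p.1.1⁻¹ by group, Perm.cycleType_conj, h₀]⟩, p.1.1 x₀)
  have hF : Function.Bijective F := by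
    constructor
    · rintro ⟨⟨h, hh⟩, ⟨d, hd⟩⟩ ⟨⟨h', hh'⟩, ⟨d', hd'⟩⟩ e
      simp only [F, Prod.mk.injEq, Subtype.mk.injEq] at e
      obtain ⟨e1, e2⟩ := e
      rw [hmem] at hh hd hh' hd'
      have k1 : h'⁻¹ * h = 1 := by
        apply g₀.rigid hc x₀
        · rw [mul_assoc, hh, inv_mul_eq_iff_eq_mul, ← mul_assoc, ← mul_assoc, hh']; group
        · have a := key h d hh hd
          rw [e1, key h' d' hh' hd'] at a
          calc h'⁻¹ * h * (σ₀ * ρ * σ₀⁻¹) = h'⁻¹ * (h * (σ₀ * ρ * σ₀⁻¹) * h⁻¹) * h := by group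
            _ = _ := by rw [← a]; group
        · rw [Perm.mul_apply, e2, Perm.inv_eq_iff_eq]
      have k2 : h = h' := (inv_mul_eq_one.1 k1).symm
      subst k2
      have k3 : d = d' := mul_left_cancel e1
      subst k3
      rfl
    · rintro ⟨⟨σ, hσ⟩, x⟩
      have g := good_of_conj hc hρ fρ hσ
      obtain ⟨h, h1, h2, h3⟩ := g₀.exists_conj g hc x₀ x
      refine ⟨(⟨h, (hmem _).2 h1⟩, ⟨σ₀⁻¹ * h⁻¹ * σ, (hmem _).2 ?_⟩), ?_⟩
      · calc σ₀⁻¹ * h⁻¹ * σ * ρ = σ₀⁻¹ * h⁻¹ * (σ * ρ * σ⁻¹ * h) * h⁻¹ * σ := by group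
          _ = _ := by rw [← h2]; group
      · simp only [F, Prod.mk.injEq, Subtype.mk.injEq]
        exact ⟨by group, h3⟩
  have := Nat.card_congr (Equiv.ofBijective F hF)
  rw [Nat.card_prod, Nat.card_prod, Nat.card_eq_fintype_card (α := α), hc] at this
  exact this.symm

end pairs

theorem rho_mul_rho (n : ℕ) : rho n * rho n = 1 := by
  ext x
  exact congrArg Fin.val (Function.Involutive.toPerm_involutive _ x)

theorem rho_val (n : ℕ) (x : Fin (2 * n)) :
    (rho n x).val = if x.val % 2 = 0 then x.val + 1 else x.val - 1 := rfl

theorem rho_ne (n : ℕ) (x : Fin (2 * n)) : rho n x ≠ x := by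
  intro h
  have := congrArg Fin.val h
  rw [rho_val] at this
  split_ifs at this <;> omega

theorem cycleType_rho (n : ℕ) : (rho n).cycleType = Multiset.replicate n 2 := by
  apply cycleType_of_semireg _ _ _ le_rfl (by simp [mul_comm])
  intro x i
  obtain ⟨k, rfl | rfl⟩ := Nat.even_or_odd' i
  · simp [pow_mul, pow_two, rho_mul_rho]
  · simp [pow_add, pow_mul, pow_two, rho_mul_rho, rho_ne]

theorem card_centralizer_rho (n : ℕ) (hn : 2 ≤ n) :
    Nat.card (Subgroup.centralizer {rho n}) = 2 ^ n * n.factorial := by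
  rw [Perm.nat_card_centralizer, cycleType_rho]
  have : n ≠ 0 := by omega
  simp [Multiset.toFinset_replicate, this, mul_comm]

/-- The shift by one on `Fin (2n)`. -/
def shift (n : ℕ) : Perm (Fin (2 * n)) := finRotate (2 * n)

theorem shift_val (n : ℕ) (x : Fin (2 * n)) : (shift n x).val = (x.val + 1) % (2 * n) := by
  obtain _ | n := n
  · exact x.elim0
  · have := finRotate_apply (n := 2 * n + 2) x
    have h2 : shift (n + 1) x = x + 1 := this
    rw [h2, Fin.val_add]
    simp

theorem shift_inv_val (n : ℕ) (x : Fin (2 * n)) :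
    ((shift n)⁻¹ x).val = if x.val = 0 then 2 * n - 1 else x.val - 1 := by
  obtain ⟨y, rfl⟩ := (shift n).surjective x
  rw [show (shift n)⁻¹ (shift n y) = y from (shift n).symm_apply_apply y, shift_val]
  have := y.isLt
  by_cases h : y.val + 1 = 2 * n
  · rw [h, Nat.mod_self]; simp; omega
  · rw [Nat.mod_eq_of_lt (by omega)]; simp

theorem pi_val (n : ℕ) (x : Fin (2 * n)) :
    ((shift n * rho n * (shift n)⁻¹ * rho n) x).val =
      if x.val % 2 = 0 then (x.val + 2) % (2 * n) else (x.val + (2 * n - 2)) % (2 * n) := by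
  have hx := x.isLt
  simp only [Perm.mul_apply]
  rw [shift_val, rho_val, shift_inv_val, rho_val]
  have e2 : (2 * n) % 2 = 0 := by omega
  by_cases h : x.val % 2 = 0
  · rw [if_pos h, if_neg (by omega : x.val + 1 ≠ 0), if_pos h]
    rw [if_pos (by omega)]
    simp
  · rw [if_neg h, if_neg h]
    by_cases h1 : x.val - 1 = 0
    · rw [if_pos h1, if_neg (by omega)]
      congr 1; omega
    · rw [if_neg h1, if_neg (by omega)]
      rw [show x.val + (2 * n - 2) = (x.val - 1 - 1 - 1 + 1) + 2 * n by omega, Nat.add_mod_right]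

theorem pi_pow_val (n : ℕ) (x : Fin (2 * n)) (i : ℕ) :
    (((shift n * rho n * (shift n)⁻¹ * rho n) ^ i) x).val =
      if x.val % 2 = 0 then (x.val + 2 * i) % (2 * n)
      else (x.val + 2 * (i * (n - 1))) % (2 * n) := by
  have hpar : ∀ a : ℕ, (a % (2 * n)) % 2 = a % 2 := fun a => Nat.mod_mod_of_dvd _ (Dvd.intro _ rfl)
  induction i with
  | zero => simp [Nat.mod_eq_of_lt x.isLt]
  | succ i ih =>
    rw [pow_succ', Perm.mul_apply, pi_val, ih]
    by_cases h : x.val % 2 = 0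
    · rw [if_pos h, if_pos h, if_pos (by rw [hpar]; omega), Nat.mod_add_mod]
      congr 1
    · rw [if_neg h, if_neg h, if_neg (by rw [hpar]; omega), Nat.mod_add_mod]
      congr 1
      rw [add_mul, mul_add]; omega

theorem good_shift (n : ℕ) (hn : 2 ≤ n) :
    (shift n * rho n * (shift n)⁻¹ * rho n).cycleType = {n, n} := by
  rw [cycleType_of_semireg _ n 2 hn (by simp)]
  · rfl
  · intro x i
    have hmod : ∀ j : ℕ, (x.val + 2 * j) % (2 * n) = x.val ↔ n ∣ j := by
      intro j
      have h1 : (x.val + 2 * j) % (2 * n) = x.val ↔ x.val + 2 * j ≡ x.val + 0 [MOD 2 * n] := by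
        unfold Nat.ModEq
        rw [add_zero, Nat.mod_eq_of_lt x.isLt]
      rw [h1, show x.val + 2 * j ≡ x.val + 0 [MOD 2 * n] ↔ 2 * j ≡ 0 [MOD 2 * n] from
        ⟨Nat.ModEq.add_left_cancel' _, Nat.ModEq.add_left _⟩, Nat.modEq_zero_iff_dvd,
        Nat.mul_dvd_mul_iff_left two_pos]
    rw [Fin.ext_iff, pi_pow_val]
    by_cases h : x.val % 2 = 0
    · rw [if_pos h, hmod]
    · rw [if_neg h, hmod]
      have : Nat.Coprime n (n - 1) := by
        rw [Nat.coprime_comm]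
        have := Nat.coprime_self_add_right (m := n - 1) (n := 1)
        rw [Nat.sub_add_cancel (by omega)] at this
        simpa using this
      exact this.dvd_mul_right

/-- The number of permutations σ of `Fin (2n)` such that σ·ρ·σ⁻¹·ρ is a product of two
disjoint n-cycles equals `2^(2n-1)·n!·(n-1)!`. -/
theorem card_Yprime (n : ℕ) (hn : 2 ≤ n) :
    Nat.card {σ : Equiv.Perm (Fin (2 * n)) |
        (σ * rho n * σ⁻¹ * rho n).cycleType = {n, n}}
      = 2 ^ (2 * n - 1) * n.factorial * (n - 1).factorial := by
  have h := count_good (by simp) (by omega) (rho_mul_rho n) (rho_ne n) (good_shift n hn)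
  rw [card_centralizer_rho n hn] at h
  apply Nat.eq_of_mul_eq_mul_right (show 0 < 2 * n by omega)
  rw [h]
  obtain ⟨m, rfl⟩ : ∃ m, n = m + 1 := ⟨n - 1, by omega⟩
  rw [show 2 * (m + 1) - 1 = 2 * m + 1 by omega, Nat.add_sub_cancel, Nat.factorial_succ]
  ring
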